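/- The modular j-function j: ℍ → ℂ satisfies the third-order algebraic differential equation S(j) + R(j)·(j')² = 0 on the upper half-plane ℍ, where R(y) = (y² - 1968y + 2654208)/(2y²(y-1728)²). -/

import Mathlib

open Complex

/-- The Schwarzian derivative of a function `f : ℂ → ℂ`:
`S(f) = (f''/f')' - (1/2)(f''/f')²`. -/
noncomputable def schwarzian (f : ℂ → ℂ) (z : ℂ) : ℂ :=
  deriv (fun w => deriv (deriv f) w / deriv f w) z - (deriv (deriv f) z / deriv f z) ^ 2 / 2

/-- `R(y) = (y² - 1968 y + 2654208)/(2 y² (y - 1728)²)`. -/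
noncomputable def Rj (y : ℂ) : ℂ :=
  (y ^ 2 - 1968 * y + 2654208) / (2 * y ^ 2 * (y - 1728) ^ 2)

/-- The upper half-plane, as a subset of `ℂ`. -/
def UHP : Set ℂ := {z : ℂ | 0 < z.im}

/-- The Möbius action of `SL₂(ℤ)` on the upper half-plane (as points of `ℂ`). -/
noncomputable def moebiusZ (g : Matrix.SpecialLinearGroup (Fin 2) ℤ) (z : ℂ) : ℂ :=
  ((((g : Matrix (Fin 2) (Fin 2) ℤ) 0 0 : ℤ) : ℂ) * z + (((g : Matrix (Fin 2) (Fin 2) ℤ) 0 1 : ℤ) : ℂ)) /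
    ((((g : Matrix (Fin 2) (Fin 2) ℤ) 1 0 : ℤ) : ℂ) * z + (((g : Matrix (Fin 2) (Fin 2) ℤ) 1 1 : ℤ) : ℂ))

section
open UpperHalfPlane hiding I
open Filter Topology ModularForm MatrixGroups EisensteinSeries Derivative
open scoped Manifold Real

lemma aux_cusp_form (k : ℤ) (F : ℍ → ℂ) (hF : MDiff F) (hs : ∀ γ : SL(2, ℤ), F ∣[k] γ = F)
    (h0 : IsZeroAtImInfty F) : ∃ f : CuspForm 𝒮ℒ k, (f : ℍ → ℂ) = F :=
  ⟨{ toFun := F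
     slash_action_eq' := fun _ ⟨γ, hγ⟩ ↦ hγ ▸ hs γ
     holo' := hF
     zero_at_cusps' := by
      intro c hc
      rw [Subgroup.IsArithmetic.isCusp_iff_isCusp_SL2Z] at hc
      rw [OnePoint.isZeroAt_iff_forall_SL2Z hc]
      intro γ _
      rw [hs]
      exact h0 }, rfl⟩

lemma aux_modular_form (k : ℤ) (F : ℍ → ℂ) (hF : MDiff F) (hs : ∀ γ : SL(2, ℤ), F ∣[k] γ = F)
    (h0 : IsBoundedAtImInfty F) : ∃ f : ModularForm 𝒮ℒ k, (f : ℍ → ℂ) = F :=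
  ⟨{ toFun := F
     slash_action_eq' := fun _ ⟨γ, hγ⟩ ↦ hγ ▸ hs γ
     holo' := hF
     bdd_at_cusps' := by
      intro c hc
      rw [Subgroup.IsArithmetic.isCusp_iff_isCusp_SL2Z] at hc
      rw [OnePoint.isBoundedAt_iff_forall_SL2Z hc]
      intro γ _
      rw [hs]
      exact h0 }, rfl⟩

lemma aux_cusp_zero (k : ℤ) (hk : k < 12) (F : ℍ → ℂ) (hF : MDiff F)
    (hs : ∀ γ : SL(2, ℤ), F ∣[k] γ = F)
    (h0 : IsZeroAtImInfty F) : F = 0 := by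
  obtain ⟨f, rfl⟩ := aux_cusp_form k F hF hs h0
  have := rank_zero_iff_forall_zero.mp (CuspForm.rank_eq_zero_of_weight_lt_twelve hk) f
  rw [this]; rfl

lemma aux_tendsto_of_hasSum {f : ℍ → ℂ} {c : ℕ → ℂ}
    (hf : MDiff f) (hs : ∀ τ : ℍ, HasSum (fun m ↦ c m • Function.Periodic.qParam 1 τ ^ m) (f τ)) :
    Tendsto f atImInfty (𝓝 (c 0)) := by
  have hb := isBoundedAtImInfty_of_hasSum_qExpansion one_pos hs
  have hper : Function.Periodic (f ∘ ofComplex) (1 : ℝ) := by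
    intro w
    by_cases hw : 0 < w.im
    · have hw' : 0 < (w + (1 : ℝ)).im := by simpa using hw
      simp only [Function.comp_apply]
      rw [ofComplex_apply_of_im_pos hw, ofComplex_apply_of_im_pos hw']
      refine (hs ⟨_, hw'⟩).unique ?_
      convert! hs ⟨w, hw⟩ using 4
      simp only [Function.Periodic.qParam]
      rw [Complex.exp_eq_exp_iff_exists_int]
      exact ⟨1, by push_cast; ring⟩
    · have hw' : (w + (1 : ℝ)).im ≤ 0 := by simpa using hw
      simp only [Function.comp_apply]
      rw [ofComplex_apply_of_im_nonpos hw', ofComplex_apply_of_im_nonpos (not_lt.mp hw)]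
  have han := analyticAt_cuspFunction_zero one_pos hper hf hb
  have h1 := hasFPowerSeriesOnBall_cuspFunction one_pos han hs
  have h2 : cuspFunction 1 f 0 = c 0 := by
    rw [← h1.coeff_zero (fun _ ↦ 0)]
    simp [FormalMultilinearSeries.ofScalars]
  rw [← h2]
  exact (han.continuousAt.tendsto.comp (qParam_tendsto_atImInfty one_pos)).congr
    (fun τ ↦ eq_cuspFunction τ one_ne_zero hper)

lemma aux_E2_tendsto : Tendsto E2 atImInfty (𝓝 1) := by
  have := aux_tendsto_of_hasSum E2_mdifferentiable (c := fun m : ℕ ↦ (if m = 0 then 1 else -24 * ArithmeticFunction.sigma 1 m : ℂ)) (fun τ ↦ by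
    simpa only [Function.Periodic.qParam, ofReal_one, div_one] using hasSum_qExpansion_E2 (z := τ))
  simpa using this

lemma aux_E_tendsto {k : ℕ} (hk : 3 ≤ k) (hk2 : Even k) : Tendsto (ModularForm.E hk) atImInfty (𝓝 1) := by
  have h1 := ModularFormClass.analyticAt_cuspFunction_zero (ModularForm.E hk) one_pos one_mem_strictPeriods_SL
  have h2 := SlashInvariantFormClass.periodic_comp_ofComplex (ModularForm.E hk) one_mem_strictPeriods_SL
  have h3 := E_qExpansion_coeff_zero hk hk2
  rw [qExpansion_coeff_zero one_pos h1 h2, ← cuspFunction_apply_zero one_pos h1 h2] at h3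
  rw [← h3]
  exact (h1.continuousAt.tendsto.comp (qParam_tendsto_atImInfty one_pos)).congr
    (fun τ ↦ SlashInvariantFormClass.eq_cuspFunction _ τ one_mem_strictPeriods_SL one_ne_zero)

lemma aux_D_tendsto {f : ℍ → ℂ} (hf : MDiff f) (hb : IsBoundedAtImInfty f) :
    Tendsto (D f) atImInfty (𝓝 0) := by
  rw [isBoundedAtImInfty_iff] at hb
  obtain ⟨M, A, hM⟩ := hb
  rw [UpperHalfPlane.mdifferentiable_iff] at hf
  have key : ∀ z : ℍ, 2 * max A 1 < z.im → ‖D f z‖ ≤ ‖(2 * π * I : ℂ)⁻¹‖ * (M / (z.im / 2)) := by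
    intro z hz
    have hA := le_max_left A 1
    have hA1 := le_max_right A 1
    unfold normalizedDerivOfComplex
    rw [norm_mul]
    gcongr
    have hsub : Metric.closedBall (z : ℂ) (z.im / 2) ⊆ {w : ℂ | max A 1 < w.im} := by
      intro w hw
      have h1 : |(w - z).im| ≤ z.im / 2 := (Complex.abs_im_le_norm _).trans (by simpa [dist_eq_norm] using hw)
      rw [abs_le] at h1
      simp at h1
      show max A 1 < w.im
      linarith [h1.1]
    apply Complex.norm_deriv_le_of_forall_mem_sphere_norm_le (by linarith)
    · apply DifferentiableOn.diffContOnCl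
      rw [closure_ball _ (by linarith)]
      exact hf.mono (fun w hw ↦ lt_trans (by positivity : 0 < max A 1) (hsub hw))
    · intro w hw
      have hw' := hsub (Metric.sphere_subset_closedBall hw)
      have hw0 : 0 < w.im := lt_trans (by positivity : 0 < max A 1) hw'
      rw [Function.comp_apply, ofComplex_apply_of_im_pos hw0]
      exact hM ⟨w, hw0⟩ (hA.trans hw'.le)
  have him : Tendsto UpperHalfPlane.im atImInfty atTop := tendsto_comap
  refine squeeze_zero_norm' (a := fun z : ℍ ↦ ‖(2 * π * I : ℂ)⁻¹‖ * (M / (z.im / 2))) ?_ ?_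
  · filter_upwards [him.eventually_gt_atTop (2 * max A 1)] with z hz using key z hz
  · have := ((him.atTop_div_const (by norm_num : (0:ℝ) < 2)).const_div_atTop M).const_mul ‖(2 * π * I : ℂ)⁻¹‖
    simpa using this

lemma aux_bdd {f : ℍ → ℂ} {c : ℂ} (h : Tendsto f atImInfty (𝓝 c)) : IsBoundedAtImInfty f :=
  h.isBigO_one ℝ

lemma aux_cast {f : ℍ → ℂ} {c : ℂ} (h : Tendsto f atImInfty (𝓝 c)) (hc : c = 0) :
    IsZeroAtImInfty f := by subst hc; exact h

lemma aux_slash {k : ℤ} (f : ModularForm 𝒮ℒ k) (γ : SL(2, ℤ)) : (f : ℍ → ℂ) ∣[k] γ = f :=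
  f.slash_action_eq' _ ⟨γ, rfl⟩

lemma ram4 (z : ℍ) : D E₄ z = 3⁻¹ * (E2 z * E₄ z - E₆ z) := by
  have h4 := aux_E_tendsto (k := 4) (by norm_num) ⟨2, rfl⟩
  have h6 := aux_E_tendsto (k := 6) (by norm_num) ⟨3, rfl⟩
  have key := aux_cusp_zero 6 (by norm_num) (serreDerivative 4 E₄ + (3⁻¹ : ℂ) • (E₆ : ℍ → ℂ))
    ((serreDerivative_mdifferentiable 4 E₄.holo').add (E₆.holo'.const_smul _))
    (fun γ ↦ by
      rw [SlashAction.add_slash, ModularForm.SL_smul_slash, aux_slash]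
      congr 1
      exact serreDerivative_slash_invariant (k := 4) E₄.holo' (aux_slash E₄ γ)) ?_
  · have := congrFun key z
    simp at this
    linear_combination this
  · have h := ((aux_D_tendsto E₄.holo' (aux_bdd h4)).sub ((aux_E2_tendsto.const_mul (4 * 12⁻¹ : ℂ)).mul h4)).add (h6.const_mul (3⁻¹ : ℂ))
    exact aux_cast h (by norm_num)

lemma ram6 (z : ℍ) : D E₆ z = 2⁻¹ * (E2 z * E₆ z - E₄ z ^ 2) := by
  have h4 := aux_E_tendsto (k := 4) (by norm_num) ⟨2, rfl⟩
  have h6 := aux_E_tendsto (k := 6) (by norm_num) ⟨3, rfl⟩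
  have key := aux_cusp_zero 8 (by norm_num) (serreDerivative 6 E₆ + (2⁻¹ : ℂ) • (E₄ * E₄ : ℍ → ℂ))
    ((serreDerivative_mdifferentiable 6 E₆.holo').add ((E₄.holo'.mul E₄.holo').const_smul _))
    (fun γ ↦ by
      rw [SlashAction.add_slash, ModularForm.SL_smul_slash]
      congr 1
      · exact serreDerivative_slash_invariant (k := 6) E₆.holo' (aux_slash E₆ γ)
      · congr 1
        have := ModularForm.mul_slash_SL2 4 4 γ E₄ E₄
        rw [aux_slash] at this
        exact this) ?_
  · have := congrFun key z
    simp at this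
    linear_combination this
  · have h := ((aux_D_tendsto E₆.holo' (aux_bdd h6)).sub ((aux_E2_tendsto.const_mul (6 * 12⁻¹ : ℂ)).mul h6)).add ((h4.mul h4).const_mul (2⁻¹ : ℂ))
    exact aux_cast h (by norm_num)

lemma aux_D2_deriv (γ : SL(2, ℤ)) (z : ℍ) : HasDerivAt (D2 γ ∘ ofComplex)
    (-(2 * π * I) * (γ 1 0 / denom γ z) ^ 2) z := by
  have hz := denom_ne_zero γ z
  rw [ModularGroup.denom_apply] at hz
  have h1 : HasDerivAt (fun w : ℂ ↦ (2 * π * I * γ 1 0) / (γ 1 0 * w + γ 1 1))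
      (-(2 * π * I) * (γ 1 0 / denom γ z) ^ 2) z := by
    convert! HasDerivAt.fun_div (hasDerivAt_const _ _) (((hasDerivAt_id' (z : ℂ)).const_mul (γ 1 0 : ℂ)).add_const (γ 1 1 : ℂ)) hz using 1
    rw [ModularGroup.denom_apply]
    field_simp
    ring
  refine h1.congr_of_eventuallyEq ?_
  filter_upwards [isOpen_upperHalfPlaneSet.mem_nhds z.im_pos] with w hw
  rw [Function.comp_apply, ofComplex_apply_of_im_pos hw, D2, ModularGroup.denom_apply]

lemma aux_E2_slash (γ : SL(2, ℤ)) :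
    (D E2 - (12⁻¹ : ℂ) • (E2 * E2)) ∣[(4 : ℤ)] γ = D E2 - (12⁻¹ : ℂ) • (E2 * E2) := by
  have h1 := normalizedDerivOfComplex_SL_slash (k := 2) E2_mdifferentiable (γ := γ)
  have h2 := E2_slash_action γ
  have h3 := ModularForm.mul_slash_SL2 2 2 γ E2 E2
  have hD2 : MDiff (D2 γ) := fun z ↦ UpperHalfPlane.mdifferentiableAt_iff.mpr (aux_D2_deriv γ z).differentiableAt
  have hDD2 : ∀ z, D (D2 γ) z = - (γ 1 0 / denom γ z) ^ 2 := by
    intro z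
    rw [normalizedDerivOfComplex, (aux_D2_deriv γ z).deriv]
    field_simp [Real.pi_ne_zero]
  rw [h2, normalizedDerivOfComplex_sub _ _ E2_mdifferentiable (hD2.const_smul _),
    normalizedDerivOfComplex_smul _ _ hD2] at h1
  rw [sub_eq_add_neg, SlashAction.add_slash, SlashAction.neg_slash, ModularForm.SL_smul_slash]
  rw [h2] at h3
  ext z
  have h1z := congrFun h1 z
  have h3z := congrFun h3 z
  simp [hDD2, D2, riemannZeta_two] at h1z h3z ⊢
  rw [h3z]
  have hpi : (π : ℂ) ≠ 0 := by exact_mod_cast Real.pi_ne_zero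
  simp only [mul_div_assoc] at h1z ⊢
  generalize ((γ 1 0 : ℤ) : ℂ) / denom γ z = t at h1z ⊢
  generalize ((D E2) ∣[(4 : ℤ)] γ) z = A at h1z ⊢
  have h5 : 6 / (π : ℂ) ^ 2 * 2⁻¹ * (2 * π * I * t) = 6 * (I * t * (π : ℂ)⁻¹) := by
    field_simp
  have h6 : 6 / (π : ℂ) ^ 2 * 2⁻¹ * t ^ 2 = - 3 * (I * t * (π : ℂ)⁻¹) ^ 2 := by
    have : (I * t * (π : ℂ)⁻¹) ^ 2 = - (t * (π : ℂ)⁻¹) ^ 2 := by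
      linear_combination (t * (π : ℂ)⁻¹) ^ 2 * I_sq
    rw [this]
    field_simp
    try ring
  rw [h5, h6] at h1z
  rw [h5]
  linear_combination -h1z

lemma ram2 (z : ℍ) : D E2 z = 12⁻¹ * (E2 z ^ 2 - E₄ z) := by
  have h4 := aux_E_tendsto (k := 4) (by norm_num) ⟨2, rfl⟩
  have key := aux_cusp_zero 4 (by norm_num) ((D E2 - (12⁻¹ : ℂ) • (E2 * E2)) + (12⁻¹ : ℂ) • (E₄ : ℍ → ℂ))
    (((normalizedDerivOfComplex_mdifferentiable E2_mdifferentiable).sub ((E2_mdifferentiable.mul E2_mdifferentiable).const_smul _)).add (E₄.holo'.const_smul _))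
    (fun γ ↦ by
      rw [SlashAction.add_slash, ModularForm.SL_smul_slash, aux_slash, aux_E2_slash]) ?_
  · have := congrFun key z
    simp at this
    linear_combination this
  · have h := ((aux_D_tendsto E2_mdifferentiable isBoundedAtImInfty_E2).sub ((aux_E2_tendsto.mul aux_E2_tendsto).const_mul (12⁻¹ : ℂ))).add (h4.const_mul (12⁻¹ : ℂ))
    exact aux_cast h (by norm_num)
end

section
open Filter Topology

lemma aux_inj_deriv (g : ℂ → ℂ) (hg : AnalyticAt ℂ g 0) (h0 : g 0 = 0) (s : Set ℂ) (hs : s ∈ 𝓝 (0:ℂ))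
    (hinj : Set.InjOn g s) : deriv g 0 ≠ 0 := by
  have hnz : ¬ ∀ᶠ z in 𝓝 (0:ℂ), g z = 0 := by
    intro h
    have h1 : ∀ᶠ z in 𝓝[≠] (0:ℂ), z ∈ s ∧ g z = 0 := (Filter.Eventually.and hs h).filter_mono nhdsWithin_le_nhds
    obtain ⟨x, ⟨hx, hgx⟩, hx0⟩ := (h1.and self_mem_nhdsWithin).exists
    exact hx0 (hinj hx (mem_of_mem_nhds hs) (by rw [hgx, h0]))
  obtain ⟨n, h, hh, hh0, hgh⟩ := (AnalyticAt.exists_eventuallyEq_pow_smul_nonzero_iff hg).mpr hnz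
  simp only [sub_zero, smul_eq_mul] at hgh
  have hn0 : n ≠ 0 := by
    rintro rfl
    have := hgh.self_of_nhds
    simp [h0] at this
    exact hh0 this.symm
  by_cases hn1 : n = 1
  · subst hn1
    have : HasDerivAt g (1 * h 0 + 0 * deriv h 0) 0 :=
      ((hasDerivAt_id' (0:ℂ)).fun_mul hh.differentiableAt.hasDerivAt).congr_of_eventuallyEq
        (by filter_upwards [hgh] with z hz; rw [hz, pow_one])
    rw [this.deriv]
    simpa using hh0
  exfalso
  have hnC : (n : ℂ) ≠ 0 := by exact_mod_cast hn0
  let k : ℂ → ℂ := fun z ↦ exp (Complex.log (h z / h 0) / n)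
  have hk1 : k 0 = 1 := by simp [k, div_self hh0]
  have hkan : AnalyticAt ℂ k 0 := by
    have : AnalyticAt ℂ (fun z ↦ Complex.log (h z / h 0)) 0 :=
      (hh.div_const).clog (by rw [div_self hh0]; exact Complex.one_mem_slitPlane)
    exact (this.div_const).cexp
  have hne : ∀ᶠ z in 𝓝 (0:ℂ), h z ≠ 0 := hh.continuousAt.eventually_ne hh0
  have hkn : ∀ z, h z ≠ 0 → k z ^ n = h z / h 0 := by
    intro z hz
    simp only [k]
    rw [← Complex.exp_nat_mul, mul_div_cancel₀ _ hnC, Complex.exp_log (div_ne_zero hz hh0)]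
  let φ : ℂ → ℂ := fun z ↦ z * k z
  have hφan : AnalyticAt ℂ φ 0 := analyticAt_id.mul hkan
  have hφd : deriv φ 0 = 1 := by
    have : HasDerivAt φ (1 * k 0 + 0 * deriv k 0) 0 :=
      (hasDerivAt_id' (0:ℂ)).fun_mul hkan.differentiableAt.hasDerivAt
    rw [this.deriv, hk1]; simp
  have hφs : HasStrictDerivAt φ (deriv φ 0) 0 := hφan.hasStrictDerivAt
  have hφ0 : φ 0 = 0 := by simp [φ]
  have hmap := hφs.map_nhds_eq (by rw [hφd]; exact one_ne_zero)
  rw [hφ0] at hmap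
  have hgφ : ∀ᶠ z in 𝓝 (0:ℂ), z ∈ s ∧ g z = h 0 * φ z ^ n := by
    filter_upwards [hs, hgh, hne] with z hzs hz hz0
    refine ⟨hzs, ?_⟩
    rw [hz, mul_pow, hkn z hz0]
    field_simp
  have him : φ '' {z | z ∈ s ∧ g z = h 0 * φ z ^ n} ∈ 𝓝 (0:ℂ) := by
    rw [← hmap]; exact image_mem_map hgφ
  obtain ⟨ζ, hζ⟩ : ∃ ζ : ℂ, IsPrimitiveRoot ζ n := ⟨_, Complex.isPrimitiveRoot_exp n hn0⟩
  have hζ1 : ζ ≠ 1 := hζ.ne_one (by omega)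
  have ht : Tendsto (fun z ↦ ζ * φ z) (𝓝 0) (𝓝 0) := by
    have := (hφan.continuousAt.tendsto).const_mul ζ
    rwa [hφ0, mul_zero] at this
  have hev := ((ht.eventually_mem him).and hgφ).filter_mono (nhdsWithin_le_nhds (s := {0}ᶜ))
  obtain ⟨x, ⟨⟨y, ⟨hys, hgy⟩, hyx⟩, hxs, hgx⟩, hx0⟩ := (hev.and self_mem_nhdsWithin).exists
  have hxy : y = x := by
    apply hinj hys hxs
    rw [hgy, hgx, hyx, mul_pow, hζ.pow_eq_one, one_mul]
  subst hxy
  have hφy : φ y ≠ 0 := mul_ne_zero hx0 (Complex.exp_ne_zero _)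
  apply hζ1
  have : (ζ - 1) * φ y = 0 := by linear_combination -hyx
  rcases mul_eq_zero.mp this with h | h
  · linear_combination h
  · exact absurd h hφy

lemma aux_pole (f : ℂ → ℂ) (r : ℝ) (hr : 0 < r)
    (hf : ∀ q : ℂ, q ≠ 0 → ‖q‖ < r → DifferentiableAt ℂ f q)
    (hinj : ∀ p q : ℂ, p ≠ 0 → q ≠ 0 → ‖p‖ < r → ‖q‖ < r → f p = f q → p = q) :
    ∃ L, Tendsto (fun q ↦ q * f q) (𝓝[≠] 0) (𝓝 L) := by
  set q0 : ℂ := ((r / 2 : ℝ) : ℂ) with hq0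
  have hq0n : ‖q0‖ = r / 2 := by rw [hq0, Complex.norm_real, Real.norm_of_nonneg (by positivity)]
  have hq00 : q0 ≠ 0 := by rw [← norm_pos_iff, hq0n]; positivity
  have hball : ∀ q ∈ Metric.ball q0 (r/4), r/4 < ‖q‖ ∧ ‖q‖ < r := by
    intro q hq
    rw [mem_ball_iff_norm] at hq
    have h1 := norm_sub_norm_le q q0
    have h2 := norm_sub_norm_le q0 q
    rw [norm_sub_rev] at h2
    constructor <;> linarith
  have hball' : ∀ q ∈ Metric.ball q0 (r/4), q ≠ 0 := fun q hq ↦ by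
    rw [← norm_pos_iff]; linarith [(hball q hq).1]
  have hbn : Metric.ball q0 (r/4) ∈ 𝓝 q0 := Metric.ball_mem_nhds _ (by positivity)
  have han : AnalyticAt ℂ f q0 := by
    apply DifferentiableOn.analyticAt (s := Metric.ball q0 (r/4)) _ hbn
    intro q hq
    exact (hf q (hball' q hq) (hball q hq).2).differentiableWithinAt
  have hopen : 𝓝 (f q0) ≤ map f (𝓝 q0) := by
    rcases han.eventually_constant_or_nhds_le_map_nhds with h | h
    · exfalso
      obtain ⟨x, ⟨hx, hxb⟩, hxn⟩ := (((h.and hbn).filter_mono (nhdsWithin_le_nhds (s := {q0}ᶜ))).and self_mem_nhdsWithin).exists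
      exact hxn (hinj x q0 (hball' x hxb) hq00 (hball x hxb).2 (by linarith) hx)
    · exact h
  obtain ⟨δ, hδ, hδs⟩ := Metric.mem_nhds_iff.mp (hopen (image_mem_map hbn))
  have hfar : ∀ q : ℂ, q ≠ 0 → ‖q‖ < r/4 → δ ≤ ‖f q - f q0‖ := by
    intro q hq hqr
    by_contra! hlt
    obtain ⟨p, hp, hpq⟩ := hδs (mem_ball_iff_norm.mpr hlt)
    have := hinj p q (hball' p hp) hq (hball p hp).2 (by linarith) hpq
    subst this
    linarith [(hball p hp).1]
  set g : ℂ → ℂ := fun q ↦ (f q - f q0)⁻¹ with hg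
  have hfne : ∀ q : ℂ, q ≠ 0 → ‖q‖ < r/4 → f q - f q0 ≠ 0 := fun q hq hqr ↦ by
    rw [← norm_pos_iff]; linarith [hfar q hq hqr]
  have hB : Metric.ball (0:ℂ) (r/4) ∈ 𝓝 (0:ℂ) := Metric.ball_mem_nhds _ (by positivity)
  have hgd := Complex.differentiableOn_update_limUnder_of_bddAbove (f := g) hB
    (fun q hq ↦ (((hf q hq.2 (by have := mem_ball_zero_iff.mp hq.1; linarith)).sub_const _).inv (hfne q hq.2 (mem_ball_zero_iff.mp hq.1))).differentiableWithinAt)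
    ⟨δ⁻¹, by
      rintro _ ⟨q, hq, rfl⟩
      simp only [Function.comp_apply, hg, norm_inv]
      exact inv_anti₀ hδ (hfar q hq.2 (mem_ball_zero_iff.mp hq.1))⟩
  set G := Function.update g 0 (limUnder (𝓝[≠] 0) g) with hG
  have hGg : ∀ q, q ≠ 0 → G q = g q := fun q hq ↦ Function.update_of_ne hq _ _
  have hGan : AnalyticAt ℂ G 0 := hgd.analyticAt hB
  have hfG : ∀ᶠ q in 𝓝[≠] (0:ℂ), f q = (G q)⁻¹ + f q0 := by
    filter_upwards [self_mem_nhdsWithin] with q hq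
    rw [hGg q hq]; simp [hg]
  have hid : Tendsto (fun q : ℂ ↦ q) (𝓝[≠] 0) (𝓝 0) := tendsto_id.mono_left nhdsWithin_le_nhds
  by_cases h0 : G 0 = 0
  · have hd := aux_inj_deriv G hGan h0 _ hB (by
      intro p hp q hq hpq
      rw [mem_ball_zero_iff] at hp hq
      by_cases hp0 : p = 0
      · by_cases hq0 : q = 0
        · rw [hp0, hq0]
        · exfalso
          rw [hp0, h0, hGg q hq0] at hpq
          exact inv_ne_zero (hfne q hq0 hq) hpq.symm
      · by_cases hq0 : q = 0
        · exfalso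
          rw [hq0, h0, hGg p hp0] at hpq
          exact inv_ne_zero (hfne p hp0 hp) hpq
        · rw [hGg p hp0, hGg q hq0] at hpq
          refine hinj p q hp0 hq0 (by linarith) (by linarith) ?_
          simpa using inv_injective hpq)
    have hs := hasDerivAt_iff_tendsto_slope.mp hGan.differentiableAt.hasDerivAt
    refine ⟨(deriv G 0)⁻¹ + 0 * f q0, ((hs.inv₀ hd).add (hid.mul_const (f q0))).congr' ?_⟩
    filter_upwards [hfG] with q hq
    rw [hq, slope_def_field, h0]
    simp [div_eq_mul_inv, mul_add, mul_comm]
  · have hs : Tendsto G (𝓝[≠] 0) (𝓝 (G 0)) := hGan.continuousAt.tendsto.mono_left nhdsWithin_le_nhds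
    refine ⟨0 * ((G 0)⁻¹ + f q0), (hid.mul ((hs.inv₀ h0).add_const (f q0))).congr' ?_⟩
    filter_upwards [hfG] with q hq
    rw [hq]
end

section
open UpperHalfPlane hiding I
open Filter Topology ModularForm MatrixGroups EisensteinSeries Derivative
open scoped Manifold Real

lemma aux_calc (J e2 e4 e6 : ℂ → ℂ) (c : ℂ) (hc : c ≠ 0) (U : Set ℂ) (hU : IsOpen U)
    (h2 : ∀ z ∈ U, HasDerivAt e2 (c * (12⁻¹ * (e2 z ^ 2 - e4 z))) z)
    (h4 : ∀ z ∈ U, HasDerivAt e4 (c * (3⁻¹ * (e2 z * e4 z - e6 z))) z)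
    (h6 : ∀ z ∈ U, HasDerivAt e6 (c * (2⁻¹ * (e2 z * e6 z - e4 z ^ 2))) z)
    (hd : ∀ z ∈ U, e4 z ^ 3 - e6 z ^ 2 ≠ 0)
    (hJ : ∀ z ∈ U, J z = 1728 * e4 z ^ 3 / (e4 z ^ 3 - e6 z ^ 2))
    (z : ℂ) (hz : z ∈ U) (n4 : e4 z ≠ 0) (n6 : e6 z ≠ 0) :
    schwarzian J z + Rj (J z) * (deriv J z) ^ 2 = 0 := by
  have d1 : ∀ w ∈ U, deriv J w = c * (-1728 * e4 w ^ 2 * e6 w / (e4 w ^ 3 - e6 w ^ 2)) := by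
    intro w hw
    have hdw := hd w hw
    have : HasDerivAt J _ w := ((((h4 w hw).fun_pow 3).const_mul 1728).fun_div
      (((h4 w hw).fun_pow 3).fun_sub ((h6 w hw).fun_pow 2)) hdw).congr_of_eventuallyEq
      (by filter_upwards [hU.mem_nhds hw] with v hv using hJ v hv)
    rw [this.deriv]
    field_simp
    push_cast
    ring
  have d2 : ∀ w ∈ U, deriv (deriv J) w = c * (-1728 * e4 w ^ 2 * e6 w / (e4 w ^ 3 - e6 w ^ 2)) *
      (c * (e2 w / 6) ) + c^2 * (1152 * e4 w * e6 w ^ 2 + 864 * e4 w ^ 4) / (e4 w ^ 3 - e6 w ^ 2) := by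
    intro w hw
    have hdw := hd w hw
    have : HasDerivAt (deriv J) _ w := ((((((h4 w hw).fun_pow 2).const_mul (-1728)).fun_mul (h6 w hw)).fun_div
      (((h4 w hw).fun_pow 3).fun_sub ((h6 w hw).fun_pow 2)) hdw).const_mul c).congr_of_eventuallyEq
      (by filter_upwards [hU.mem_nhds hw] with v hv using d1 v hv)
    rw [this.deriv]
    field_simp
    push_cast
    ring
  have c4 := (h4 z hz).continuousAt.eventually_ne n4
  have c6 := (h6 z hz).continuousAt.eventually_ne n6
  have d3 : (fun w ↦ deriv (deriv J) w / deriv J w) =ᶠ[𝓝 z]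
      (fun w ↦ c * (e2 w / 6 - 2 * e6 w / (3 * e4 w) - e4 w ^ 2 / (2 * e6 w))) := by
    filter_upwards [hU.mem_nhds hz, c4, c6] with w hw n4 n6
    have hdw := hd w hw
    rw [d1 w hw, d2 w hw]
    field_simp
    ring
  have d4 := (((((h2 z hz).div_const 6).fun_sub (((h6 z hz).const_mul 2).fun_div ((h4 z hz).const_mul 3)
    (mul_ne_zero (by norm_num) n4))).fun_sub (((h4 z hz).fun_pow 2).fun_div ((h6 z hz).const_mul 2)
    (mul_ne_zero (by norm_num) n6))).const_mul c).congr_of_eventuallyEq d3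
  have hdz := hd z hz
  have hJ' : J z - 1728 = 1728 * e6 z ^ 2 / (e4 z ^ 3 - e6 z ^ 2) := by
    rw [hJ z hz]; field_simp; ring
  rw [schwarzian, d4.deriv, d3.eq_of_nhds, Rj, hJ', d1 z hz, hJ z hz]
  generalize e2 z = a at *
  generalize e4 z = b at *
  generalize e6 z = d at *
  push_cast
  field_simp
  ring

lemma aux_final (J : ℂ → ℂ)
    (hJ : ∀ z : ℍ, J z = E₄ z ^ 3 / discriminant z) :
    ∀ z ∈ UHP, J z ≠ 0 → J z ≠ 1728 →
      schwarzian J z + Rj (J z) * (deriv J z) ^ 2 = 0 := by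
  intro z hz h0 h1
  have hpi : (2 * π * I : ℂ) ≠ 0 := by simp [Real.pi_ne_zero]
  have hD : ∀ (f : ℍ → ℂ) (hf : MDiff f) (d : ℍ → ℂ) (hd : ∀ w, D f w = d w) (w : ℂ) (hw : w ∈ UHP),
      HasDerivAt (f ∘ ofComplex) (2 * π * I * d (ofComplex w)) w := by
    intro f hf d hd w hw
    have h1 := (UpperHalfPlane.mdifferentiable_iff.mp hf).differentiableAt (isOpen_upperHalfPlaneSet.mem_nhds hw)
    have h2 := h1.hasDerivAt
    rw [← hd, normalizedDerivOfComplex, ofComplex_apply_of_im_pos hw]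
    convert! h2 using 1
    field_simp
  have hdisc : ∀ w : ℍ, discriminant w ≠ 0 := discriminant_ne_zero
  have hJ2 : ∀ w : ℍ, J w = 1728 * E₄ w ^ 3 / (E₄ w ^ 3 - E₆ w ^ 2) := by
    intro w
    rw [hJ, discriminant_eq_E₄_cube_sub_E₆_sq]
    rw [div_div_eq_mul_div, mul_comm]
  have hne : ∀ w : ℍ, E₄ w ^ 3 - E₆ w ^ 2 ≠ 0 := by
    intro w h
    apply hdisc w
    rw [discriminant_eq_E₄_cube_sub_E₆_sq, h, zero_div]
  have hco : ∀ w ∈ UHP, ((ofComplex w : ℍ) : ℂ) = w := by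
    intro w hw
    rw [ofComplex_apply_of_im_pos hw]
  refine aux_calc J (E2 ∘ ofComplex) (E₄ ∘ ofComplex) (E₆ ∘ ofComplex) _ hpi UHP isOpen_upperHalfPlaneSet
    (hD _ E2_mdifferentiable _ ram2) (hD _ E₄.holo' _ ram4) (hD _ E₆.holo' _ ram6) (fun w _ ↦ hne _)
    (fun w hw ↦ ?_) z hz ?_ ?_
  · have := hJ2 (ofComplex w)
    rwa [hco w hw] at this
  · intro h
    apply h0
    have := hJ2 (ofComplex z)
    rw [hco z hz] at this
    simp only [Function.comp_apply] at h
    rw [this, h]; simp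
  · intro h
    apply h1
    have := hJ2 (ofComplex z)
    have h3 := hne (ofComplex z)
    rw [hco z hz] at this
    simp only [Function.comp_apply] at h
    rw [h] at this h3
    rw [this]
    field_simp
    simp

lemma E6_I (z : ℍ) (hz : (z : ℂ) = I) : E₆ z = 0 := by
  have h := congrFun (aux_slash E₆ ModularGroup.S) z
  rw [ModularForm.SL_slash_apply] at h
  have h2 : ModularGroup.S • z = z := by
    ext
    rw [UpperHalfPlane.modular_S_smul]
    simp [hz]
  rw [h2, ModularGroup.denom_apply, hz] at h
  simp [ModularGroup.S] at h
  have h5 : E₆ z = 0 := by linear_combination (-1/2 : ℂ) * h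
  exact h5

lemma E4_rho (z : ℍ) (hz : (z : ℂ) = (-1 + Real.sqrt 3 * Complex.I) / 2) : E₄ z = 0 := by
  obtain ⟨γ, h00, h01, h10, h11⟩ : ∃ γ : SL(2, ℤ), γ 0 0 = -1 ∧ γ 0 1 = -1 ∧ γ 1 0 = 1 ∧ γ 1 1 = 0 :=
    ⟨⟨!![-1, -1; 1, 0], by simp⟩, rfl, rfl, rfl, rfl⟩
  have h := congrFun (aux_slash E₄ γ) z
  rw [ModularForm.SL_slash_apply] at h
  have hs : ((Real.sqrt 3 : ℝ) : ℂ) ^ 2 = 3 := by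
    exact_mod_cast Real.sq_sqrt (by norm_num : (0:ℝ) ≤ 3)
  have hq : (z : ℂ) ^ 2 = -1 - z := by
    rw [hz]; linear_combination (Complex.I ^ 2 / 4) * hs + 3/4 * I_sq
  have h0 : (z : ℂ) ≠ 0 := z.ne_zero
  have h2 : γ • z = z := by
    ext
    rw [UpperHalfPlane.specialLinearGroup_apply]
    simp [h00, h01, h10, h11]
    field_simp
    linear_combination - hq
  rw [h2, ModularGroup.denom_apply, h10, h11] at h
  have h3 : (z : ℂ) ^ 4 = z := by linear_combination (z^2 - z : ℂ) * hq
  have h4 : ((1 : ℤ) * (z : ℂ) + (0 : ℤ)) ^ (-4:ℤ) = (z : ℂ)⁻¹ := by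
    rw [zpow_neg]
    congr 1
    simpa using (by exact_mod_cast h3 : (z : ℂ) ^ (4:ℤ) = z)
  rw [h4] at h
  by_contra hE
  have h5 : (z : ℂ) = 1 := by
    field_simp at h
    linear_combination -h
  rw [h5] at hq
  norm_num at hq
end

section
open UpperHalfPlane hiding I
open Filter Topology ModularForm MatrixGroups EisensteinSeries Derivative
open scoped Manifold Real

lemma aux_coe (γ : SL(2, ℤ)) (z : ℍ) : ((γ • z : ℍ) : ℂ) = moebiusZ γ z := by
  rw [UpperHalfPlane.specialLinearGroup_apply]
  simp [moebiusZ]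

lemma aux_same_q (z w : ℍ) (hz : 1 < z.im) (hw : 1 < w.im) (γ : SL(2, ℤ)) (h : w = γ • z) :
    Function.Periodic.qParam 1 z = Function.Periodic.qParam 1 w := by
  have hc : γ 1 0 = 0 := by
    by_contra hc
    have him := ModularGroup.im_smul_eq_div_normSq γ z
    rw [← h, ModularGroup.denom_apply] at him
    have h1 : (1:ℝ) ≤ ((γ 1 0 : ℤ) : ℝ) ^ 2 := by
      exact_mod_cast Int.one_le_abs (pow_ne_zero 2 hc) |>.trans_eq (abs_of_nonneg (sq_nonneg _))
    have h2 : normSq ((γ 1 0 : ℂ) * z + γ 1 1) ≥ z.im ^ 2 := by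
      rw [normSq_apply]
      simp
      nlinarith [mul_self_nonneg (((γ 1 0 : ℤ) : ℝ) * z.re + ((γ 1 1 : ℤ) : ℝ)), sq_nonneg z.im]
    have h3 : z.im / normSq ((γ 1 0 : ℂ) * z + γ 1 1) ≤ z.im / z.im ^ 2 := by
      gcongr
    rw [← him] at h3
    have h4 : z.im / z.im ^ 2 < 1 := by
      rw [div_lt_one (by positivity)]
      nlinarith
    linarith
  obtain ⟨n, hn⟩ := ModularGroup.exists_eq_T_zpow_of_c_eq_zero hc
  rw [h, hn, ModularGroup.coe_T_zpow_smul_eq]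
  simp only [Function.Periodic.qParam]
  rw [Complex.exp_eq_exp_iff_exists_int]
  exact ⟨-n, by push_cast; ring⟩

lemma aux_limit (J : ℂ → ℂ)
    (hhol : DifferentiableOn ℂ J UHP)
    (hinv : ∀ (g : Matrix.SpecialLinearGroup (Fin 2) ℤ), ∀ z ∈ UHP, J (moebiusZ g z) = J z)
    (hfib : ∀ z ∈ UHP, ∀ w ∈ UHP, J z = J w → ∃ g : Matrix.SpecialLinearGroup (Fin 2) ℤ,
      w = moebiusZ g z) :
    ∃ L, Tendsto (fun z : ℍ ↦ J z * discriminant z) atImInfty (𝓝 L) := by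
  set F : ℂ → ℂ := (fun z : ℍ ↦ J z) ∘ ofComplex with hF
  have hFJ : ∀ z, 0 < z.im → F z = J z := by
    intro z hz
    simp only [hF, Function.comp_apply]
    rw [ofComplex_apply_of_im_pos hz]
  have hper : Function.Periodic F (1 : ℝ) := by
    intro w
    by_cases hw : 0 < w.im
    · have hw' : 0 < (w + (1 : ℝ)).im := by simpa using hw
      rw [hFJ _ hw, hFJ _ hw', ← hinv ModularGroup.T w hw]
      simp [moebiusZ, ModularGroup.T]
    · have hw' : (w + (1 : ℝ)).im ≤ 0 := by simpa using hw
      simp only [hF, Function.comp_apply]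
      rw [ofComplex_apply_of_im_nonpos hw', ofComplex_apply_of_im_nonpos (not_lt.mp hw)]
  set f := Function.Periodic.cuspFunction 1 F with hf
  set r := Real.exp (-2 * π * 1 / 1) with hr
  have him : ∀ q : ℂ, q ≠ 0 → ‖q‖ < r → 1 < (Function.Periodic.invQParam 1 q).im := by
    intro q hq hqr
    rw [← Function.Periodic.qParam_right_inv one_ne_zero hq, Function.Periodic.norm_qParam_lt_iff one_pos] at hqr
    exact hqr
  obtain ⟨L, hL⟩ := aux_pole f r (Real.exp_pos _)
    (by
      intro q hq hqr
      have h1 := him q hq hqr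
      have := Function.Periodic.differentiableAt_cuspFunction (h := 1) (f := F) one_ne_zero hper
        (z := Function.Periodic.invQParam 1 q) (by
          have hpos : 0 < (Function.Periodic.invQParam 1 q).im := by linarith
          refine (hhol.differentiableAt (isOpen_upperHalfPlaneSet.mem_nhds hpos)).congr_of_eventuallyEq ?_
          filter_upwards [isOpen_upperHalfPlaneSet.mem_nhds hpos] with v hv using hFJ v hv)
      rwa [Function.Periodic.qParam_right_inv one_ne_zero hq] at this)
    (by
      intro p q hp hq hpr hqr hpq
      have h1 := him p hp hpr
      have h2 := him q hq hqr
      have p1 : 0 < (Function.Periodic.invQParam 1 p).im := by linarith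
      have p2 : 0 < (Function.Periodic.invQParam 1 q).im := by linarith
      rw [hf, Function.Periodic.cuspFunction_eq_of_nonzero _ _ hp,
        Function.Periodic.cuspFunction_eq_of_nonzero _ _ hq, hFJ _ p1, hFJ _ p2] at hpq
      obtain ⟨g, hg⟩ := hfib _ p1 _ p2 hpq
      have := aux_same_q ⟨_, p1⟩ ⟨_, p2⟩ h1 h2 g (by ext; rw [aux_coe]; exact hg)
      simpa [Function.Periodic.qParam_right_inv one_ne_zero hq,
        Function.Periodic.qParam_right_inv one_ne_zero hp] using this)
  have hq : Tendsto (fun z : ℍ ↦ Function.Periodic.qParam 1 z) atImInfty (𝓝[≠] 0) :=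
    tendsto_nhdsWithin_iff.mpr ⟨qParam_tendsto_atImInfty one_pos,
      Eventually.of_forall fun z ↦ Function.Periodic.qParam_ne_zero _⟩
  refine ⟨L * 1, ((hL.comp hq).mul tendsto_atImInfty_tprod_one_sub_eta_q_pow).congr fun z ↦ ?_⟩
  rw [discriminant_eq_q_prod, Function.comp_apply, hf, Function.Periodic.eq_cuspFunction one_ne_zero hper, hFJ _ z.im_pos]
  ring

lemma aux_J (J : ℂ → ℂ)
    (hhol : DifferentiableOn ℂ J UHP)
    (hinv : ∀ (g : Matrix.SpecialLinearGroup (Fin 2) ℤ), ∀ z ∈ UHP, J (moebiusZ g z) = J z)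
    (hfib : ∀ z ∈ UHP, ∀ w ∈ UHP, J z = J w → ∃ g : Matrix.SpecialLinearGroup (Fin 2) ℤ,
      w = moebiusZ g z)
    (hJi : J Complex.I = 1728)
    (hJρ : J ((-1 + Real.sqrt 3 * Complex.I) / 2) = 0) (z : ℍ) :
    J z = E₄ z ^ 3 / discriminant z := by
  obtain ⟨L, hL⟩ := aux_limit J hhol hinv hfib
  have hdisc : ∀ w : ℍ, discriminant w ≠ 0 := discriminant_ne_zero
  have h4 := aux_E_tendsto (k := 4) (by norm_num) ⟨2, rfl⟩
  have hJm : MDiff (fun z : ℍ ↦ J z) := by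
    rw [UpperHalfPlane.mdifferentiable_iff]
    refine hhol.congr fun w hw ↦ ?_
    simp only [Function.comp_apply]
    rw [ofComplex_apply_of_im_pos hw]
  have hDs := SlashInvariantForm.slash_action_generators_SL2Z discriminant_S_invariant discriminant_T_invariant
  have hDm : MDiff discriminant := CuspForm.discriminant.holo'
  obtain ⟨f, hf⟩ := aux_cusp_form 12 (fun z ↦ J z * discriminant z + (-L) * (E₄ z * (E₄ z * E₄ z)))
    ((hJm.mul hDm).add ((E₄.holo'.mul (E₄.holo'.mul E₄.holo')).const_smul (-L)))
    (fun γ ↦ by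
      ext z
      have e1 := congrFun (hDs γ) z
      have e2 := congrFun (aux_slash E₄ γ) z
      rw [ModularForm.SL_slash_apply] at e1 e2 ⊢
      rw [aux_coe, hinv _ _ z.im_pos]
      generalize denom γ z = d at *
      rw [← e1, ← e2]
      have hd : d ^ (-12 : ℤ) = d ^ (-4 : ℤ) * (d ^ (-4 : ℤ) * d ^ (-4 : ℤ)) := by
        simp only [zpow_neg]
        norm_cast
        rw [← mul_inv, ← mul_inv]
        congr 1; ring
      linear_combination (-L) * (E₄ (γ • z)) ^ 3 * hd)
    (aux_cast (hL.add ((h4.mul (h4.mul h4)).const_mul (-L))) (by ring))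
  obtain ⟨b, hb⟩ := CuspForm.exists_smul_discriminant_of_weight_eq_twelve f
  have key : ∀ w : ℍ, b * discriminant w = J w * discriminant w + (-L) * (E₄ w * (E₄ w * E₄ w)) := by
    intro w
    have := congrFun hf w
    rw [← this, ← hb]
    rfl
  have hb0 : b = 0 := by
    have hpos : 0 < (((-1 + Real.sqrt 3 * Complex.I) / 2 : ℂ)).im := by simp
    have k := key ⟨_, hpos⟩
    rw [E4_rho ⟨_, hpos⟩ rfl] at k
    simp [hJρ] at k
    exact k.resolve_right (hdisc _)
  have hL1 : L = 1 := by
    have hpos : 0 < (Complex.I).im := by simp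
    have k := key ⟨_, hpos⟩
    have k2 := discriminant_eq_E₄_cube_sub_E₆_sq ⟨_, hpos⟩
    rw [E6_I ⟨_, hpos⟩ rfl] at k2
    have k3 := hdisc ⟨_, hpos⟩
    rw [hb0] at k
    simp only [hJi] at k
    have : (L - 1) * (1728 * discriminant ⟨_, hpos⟩) = 0 := by
      linear_combination k + 1728 * L * k2
    rcases mul_eq_zero.mp this with h | h
    · linear_combination h
    · exact absurd h (mul_ne_zero (by norm_num) k3)
  rw [eq_div_iff (hdisc z)]
  linear_combination -key z + (discriminant z) * hb0 + E₄ z ^ 3 * hL1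
end

/-- The modular `j`-function (characterized as the holomorphic `SL₂(ℤ)`-invariant function on `ℍ`
whose fibers are exactly the `SL₂(ℤ)`-orbits, which is surjective onto `ℂ`, with `j(i) = 1728`
and `j(ρ) = 0`) satisfies the third-order differential equation `S(j) + R(j)·(j')² = 0` on `ℍ`. -/
theorem j_satisfies_schwarzian_ode (J : ℂ → ℂ)
    (hhol : DifferentiableOn ℂ J UHP)
    (hinv : ∀ (g : Matrix.SpecialLinearGroup (Fin 2) ℤ), ∀ z ∈ UHP, J (moebiusZ g z) = J z)
    (hfib : ∀ z ∈ UHP, ∀ w ∈ UHP, J z = J w → ∃ g : Matrix.SpecialLinearGroup (Fin 2) ℤ,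
      w = moebiusZ g z)
    (hsurj : ∀ w : ℂ, ∃ z ∈ UHP, J z = w)
    (hJi : J Complex.I = 1728)
    (hJρ : J ((-1 + Real.sqrt 3 * Complex.I) / 2) = 0) :
    ∀ z ∈ UHP, J z ≠ 0 → J z ≠ 1728 →
      schwarzian J z + Rj (J z) * (deriv J z) ^ 2 = 0 := by
  exact aux_final J (aux_J J hhol hinv hfib hJi hJρ)
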